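/- Let q be odd, 0 < 2t ≤ m, 1 ≤ k ≤ ⌊m/2⌋. Then W_{2k}(2t,m) - W_2(2t,m) = q^{2t} · w_{2k-2}(2t, m-2), where W_{2k}(2t,m) = #{A skew-symmetric m×m of rank ≤ 2t : tr(E_{2k}A) ≠ 0} and w_{2j}(2r, m') = #{A skew-symmetric m'×m' of rank exactly 2r : tr(E_{2j}A) ≠ 0}. In particular W_{2k}(2t,m) ≥ W_2(2t,m) for all k. -/

import Mathlib

open Matrix
def IsSkewSym {K : Type} [Field K] {m : ℕ} (A : Matrix (Fin m) (Fin m) K) : Prop :=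
  Aᵀ = -A ∧ ∀ i, A i i = 0

def Estd (K : Type) [Field K] (k m : ℕ) : Matrix (Fin m) (Fin m) K :=
  Matrix.of fun i j =>
    if j.val = i.val + 1 ∧ i.val % 2 = 0 ∧ j.val < 2*k then 1
    else if i.val = j.val + 1 ∧ j.val % 2 = 0 ∧ i.val < 2*k then -1 else 0

noncomputable def na (K : Type) [Field K] (r m : ℕ) : ℕ :=
  Nat.card {A : Matrix (Fin m) (Fin m) K // IsSkewSym A ∧ A.rank = r}

noncomputable def Na (K : Type) [Field K] (r m : ℕ) : ℕ :=
  Nat.card {A : Matrix (Fin m) (Fin m) K // IsSkewSym A ∧ A.rank ≤ r}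

noncomputable def wSmall (K : Type) [Field K] (k r m : ℕ) : ℕ :=
  Nat.card {A : Matrix (Fin m) (Fin m) K //
    IsSkewSym A ∧ A.rank = 2*r ∧ Matrix.trace (Estd K k m * A) ≠ 0}

noncomputable def Wcap (K : Type) [Field K] (k t m : ℕ) : ℕ :=
  Nat.card {A : Matrix (Fin m) (Fin m) K //
    IsSkewSym A ∧ A.rank ≤ 2*t ∧ Matrix.trace (Estd K k m * A) ≠ 0}

noncomputable def projWt (K : Type) [Field K] (m t : ℕ)
    (φ : Matrix (Fin m) (Fin m) K →ₗ[K] K) : ℕ :=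
  Nat.card {x : Projectivization K (Matrix (Fin m) (Fin m) K) //
    ∃ (A : Matrix (Fin m) (Fin m) K) (h : A ≠ 0),
      x = Projectivization.mk K A h ∧ IsSkewSym A ∧ A.rank ≤ 2*t ∧ φ A ≠ 0}

/-!
Border a skew-symmetric matrix `D` by a first row `(0, w)`. The rank stays the same if `w` lies in
the column space of `D` and goes up by two otherwise, and the trace against a bordered matrix with
first row `(0, eᵢ)` and block `E` is `tr (E D) - 2 wᵢ`. So the matrices to be counted are pairs
`(D, w)` with `wᵢ ≠ a`, where `a = tr (E D) / 2`, and for fixed `D` the set of `w` allowed by the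
rank condition is empty, the column space of `D`, or everything. Unless that set is contained in
`wᵢ = 0`, it has an element with `i`-th entry `a`, and translating by it makes the count
independent of `a`. The exception is that `D` has rank `2t` and vanishing `i`-th row: then all
`q ^ (2t)` vectors of the column space have `wᵢ = 0`, and they contribute exactly when `a ≠ 0`.
For `E = E_{2k-2}` placed below a zero row and column, with `i` the index of that row, these
exceptional `D` are counted by `w_{2k-2}(2t, m-2)`.
-/

section CommRing

variable {R : Type*} [CommRing R] {n : ℕ}

/-- The matrix `D` bordered by a new first row `(0, w)` and a new first column `(0, -w)`.
Every skew-symmetric matrix arises in this way, which allows rank, trace and counting arguments to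
proceed by induction on the size. -/
def skewBorder (w : Fin n → R) (D : Matrix (Fin n) (Fin n) R) :
    Matrix (Fin (n + 1)) (Fin (n + 1)) R :=
  of (vecCons (vecCons 0 w) fun i => vecCons (-w i) (D i))

lemma skewBorder_mulVec_vecCons (w : Fin n → R) (D : Matrix (Fin n) (Fin n) R) (c : R)
    (x : Fin n → R) :
    skewBorder w D *ᵥ vecCons c x = vecCons (w ⬝ᵥ x) (D *ᵥ x - c • w) := by
  ext i
  refine Fin.cases ?_ (fun i => ?_) i
  · simp [skewBorder, mulVec]
  · simp only [skewBorder, mulVec, of_apply, cons_val_succ, cons_dotProduct_cons, Pi.sub_apply,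
      Pi.smul_apply, smul_eq_mul]
    ring

lemma trace_skewBorder_mul_skewBorder (v w : Fin n → R) (C D : Matrix (Fin n) (Fin n) R) :
    trace (skewBorder v C * skewBorder w D) = trace (C * D) - 2 * (v ⬝ᵥ w) := by
  simp only [trace, diag, mul_apply, Fin.sum_univ_succ, skewBorder, of_apply, cons_val_zero,
    cons_val_succ, Finset.sum_add_distrib, dotProduct, mul_neg, neg_mul, Finset.sum_neg_distrib]
  ring

lemma skewBorder_zero_zero : skewBorder (0 : Fin n → R) 0 = 0 := by
  ext i j
  refine Fin.cases ?_ (fun i => ?_) i <;> refine Fin.cases ?_ (fun j => ?_) j <;>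
    simp [skewBorder]

lemma rank_le_rank_skewBorder [StrongRankCondition R] (w : Fin n → R)
    (D : Matrix (Fin n) (Fin n) R) :
    D.rank ≤ (skewBorder w D).rank :=
  (skewBorder w D).rank_submatrix_le Fin.succ Fin.succ

end CommRing

lemma exists_mem_range_mulVecLin_apply_eq {F m n : Type*} [Field F] [Fintype n] {D : Matrix m n F}
    {i : m} (hi : D.row i ≠ 0) (a : F) :
    ∃ z ∈ LinearMap.range D.mulVecLin, z i = a := by
  classical
  obtain ⟨j, hj : D i j ≠ 0⟩ := Function.ne_iff.1 hi
  exact ⟨D *ᵥ Pi.single j ((D i j)⁻¹ * a), ⟨_, rfl⟩, by simp [mul_inv_cancel_left₀ hj]⟩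

lemma apply_eq_zero_of_mem_range_mulVecLin {R m n : Type*} [CommSemiring R] [Fintype n]
    {D : Matrix m n R} {i : m} (hi : D.row i = 0) {w : m → R}
    (hw : w ∈ LinearMap.range D.mulVecLin) : w i = 0 := by
  obtain ⟨x, rfl⟩ := hw
  exact (congrArg (· ⬝ᵥ x) hi).trans (zero_dotProduct x)

lemma natCard_apply_ne_of_add_iff {ι M : Type*} [AddGroup M] {P : (ι → M) → Prop} {z : ι → M}
    (hz : ∀ w, P (w + z) ↔ P w) (i : ι) :
    Nat.card {w // P w ∧ w i ≠ z i} = Nat.card {w // P w ∧ w i ≠ 0} :=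
  (Nat.card_congr ((Equiv.addRight z).subtypeEquiv fun w => by simp [hz])).symm

lemma sum_subtype_ite_const {α : Type*} (p q : α → Prop) [Fintype {x // p x}] [DecidablePred q]
    (c : ℕ) :
    (∑ x : {x // p x}, if q x then c else 0) = c * Nat.card {x // p x ∧ q x} := by
  rw [← Finset.sum_filter, Finset.sum_const, smul_eq_mul, mul_comm, ← Fintype.card_subtype,
    ← Nat.card_eq_fintype_card, Nat.card_congr (Equiv.subtypeSubtypeEquivSubtypeInter p q)]

section SkewSym

variable {K : Type} [Field K] {n : ℕ}

namespace IsSkewSym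

lemma apply_swap {A : Matrix (Fin n) (Fin n) K} (hA : IsSkewSym A) (i j : Fin n) :
    A j i = -A i j :=
  congrFun₂ hA.1 i j

lemma eq_skewBorder {A : Matrix (Fin (n + 1)) (Fin (n + 1)) K} (hA : IsSkewSym A) :
    A = skewBorder (fun j => A 0 j.succ) (A.submatrix Fin.succ Fin.succ) := by
  ext i j
  refine Fin.cases ?_ (fun i => ?_) i <;> refine Fin.cases ?_ (fun j => ?_) j
  · exact hA.2 0
  · rfl
  · exact hA.apply_swap 0 i.succ
  · rfl

lemma skewBorder_iff {w : Fin n → K} {D : Matrix (Fin n) (Fin n) K} :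
    IsSkewSym (skewBorder w D) ↔ IsSkewSym D := by
  refine ⟨fun h => ⟨?_, fun i => h.2 i.succ⟩, fun h => ⟨?_, Fin.cases rfl h.2⟩⟩
  · ext i j
    exact h.apply_swap i.succ j.succ
  · ext i j
    refine Fin.cases ?_ (fun i => ?_) i <;> refine Fin.cases ?_ (fun j => ?_) j
    · exact neg_zero.symm
    · rfl
    · exact (neg_neg _).symm
    · exact h.apply_swap i j

lemma exists_skewBorder {A : Matrix (Fin (n + 1)) (Fin (n + 1)) K} (hA : IsSkewSym A) :
    ∃ w D, IsSkewSym D ∧ skewBorder w D = A :=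
  ⟨_, _, skewBorder_iff.1 (hA.eq_skewBorder ▸ hA), hA.eq_skewBorder.symm⟩

lemma mulVec_dotProduct {D : Matrix (Fin n) (Fin n) K} (hD : IsSkewSym D) (x y : Fin n → K) :
    D *ᵥ x ⬝ᵥ y = -(x ⬝ᵥ D *ᵥ y) := by
  rw [dotProduct_mulVec, ← mulVec_transpose, hD.1, neg_mulVec, neg_dotProduct, neg_neg]

lemma dotProduct_mulVec_self {D : Matrix (Fin n) (Fin n) K} (hD : IsSkewSym D) (x : Fin n → K) :
    x ⬝ᵥ D *ᵥ x = 0 := by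
  induction n with
  | zero => exact dotProduct_of_isEmpty _ _
  | succ n ih =>
    obtain ⟨w, C, hC, rfl⟩ := hD.exists_skewBorder
    obtain ⟨c, y, rfl⟩ : ∃ c y, x = vecCons c y := Fin.exists_cons x
    rw [skewBorder_mulVec_vecCons, cons_dotProduct_cons, dotProduct_sub, ih hC, dotProduct_smul,
      dotProduct_comm w y, smul_eq_mul, zero_sub, add_neg_cancel]

lemma rank_skewBorder_of_mem {D : Matrix (Fin n) (Fin n) K} (hD : IsSkewSym D) {w : Fin n → K}
    (hw : w ∈ LinearMap.range D.mulVecLin) : (skewBorder w D).rank = D.rank := by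
  obtain ⟨x, rfl⟩ := hw
  let graph : (Fin n → K) →ₗ[K] Fin (n + 1) → K :=
    LinearMap.vecCons (-dotProductEquiv K (Fin n) x) LinearMap.id
  have range_le : LinearMap.range (skewBorder (D *ᵥ x) D).mulVecLin ≤
      (LinearMap.range D.mulVecLin).map graph := by
    rintro _ ⟨y, rfl⟩
    obtain ⟨c, y, rfl⟩ : ∃ c v, y = vecCons c v := Fin.exists_cons y
    refine ⟨D *ᵥ (y - c • x), ⟨_, rfl⟩, ?_⟩
    simp [graph, skewBorder_mulVec_vecCons, mulVec_sub, mulVec_smul, hD.mulVec_dotProduct,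
      hD.dotProduct_mulVec_self]
  exact ((Submodule.finrank_mono range_le).trans (Submodule.finrank_map_le _ _)).antisymm
    (rank_le_rank_skewBorder _ D)

lemma rank_skewBorder_zero {D : Matrix (Fin n) (Fin n) K} (hD : IsSkewSym D) :
    (skewBorder 0 D).rank = D.rank :=
  hD.rank_skewBorder_of_mem (zero_mem _)

lemma exists_mulVec_eq_zero_of_notMem_range {D : Matrix (Fin n) (Fin n) K} (hD : IsSkewSym D)
    {w : Fin n → K} (hw : w ∉ LinearMap.range D.mulVecLin) :
    ∃ x, D *ᵥ x = 0 ∧ w ⬝ᵥ x = 1 := by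
  obtain ⟨f, hfw, hf⟩ := Submodule.exists_le_ker_of_notMem hw
  obtain ⟨x, rfl⟩ := (dotProductEquiv K (Fin n)).surjective f
  refine ⟨(x ⬝ᵥ w)⁻¹ • x, ?_, ?_⟩
  · have : D *ᵥ x = 0 := dotProduct_eq_zero _ fun y => by
      rw [hD.mulVec_dotProduct, neg_eq_zero]
      exact hf ⟨y, rfl⟩
    rw [mulVec_smul, this, smul_zero]
  · rw [dotProduct_smul, dotProduct_comm w x]
    exact inv_mul_cancel₀ hfw

lemma range_skewBorder_of_notMem {D : Matrix (Fin n) (Fin n) K} (hD : IsSkewSym D) {w : Fin n → K}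
    (hw : w ∉ LinearMap.range D.mulVecLin) :
    LinearMap.range (skewBorder w D).mulVecLin =
      (LinearMap.range D.mulVecLin ⊔ K ∙ w).map (LinearMap.vecCons 0 LinearMap.id) ⊔
        K ∙ (vecCons 1 0 : Fin (n + 1) → K) := by
  obtain ⟨x, hDx, hwx⟩ := hD.exists_mulVec_eq_zero_of_notMem_range hw
  apply le_antisymm
  · rintro _ ⟨y, rfl⟩
    obtain ⟨c, y, rfl⟩ : ∃ c v, y = vecCons c v := Fin.exists_cons y
    refine Submodule.mem_sup.2 ⟨vecCons 0 (D *ᵥ y - c • w), ⟨_, ?_, rfl⟩, (w ⬝ᵥ y) • vecCons 1 0,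
      Submodule.smul_mem _ _ (Submodule.mem_span_singleton_self _), ?_⟩
    · exact sub_mem (Submodule.mem_sup_left ⟨y, rfl⟩)
        (Submodule.mem_sup_right (Submodule.smul_mem _ c (Submodule.mem_span_singleton_self w)))
    · simp [skewBorder_mulVec_vecCons]
  · rw [Submodule.map_sup, sup_le_iff, sup_le_iff, Submodule.map_le_iff_le_comap,
      Submodule.map_le_iff_le_comap, Submodule.span_singleton_le_iff_mem,
      Submodule.span_singleton_le_iff_mem]
    refine ⟨⟨?_, vecCons (-1) 0, ?_⟩, vecCons 0 x, ?_⟩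
    · rintro _ ⟨y, rfl⟩
      refine ⟨vecCons 0 (y - (w ⬝ᵥ y) • x), ?_⟩
      simp [skewBorder_mulVec_vecCons, mulVec_sub, mulVec_smul, hDx, hwx]
    · simp [skewBorder_mulVec_vecCons]
    · simp [skewBorder_mulVec_vecCons, hDx, hwx]

lemma rank_skewBorder_of_notMem {D : Matrix (Fin n) (Fin n) K} (hD : IsSkewSym D) {w : Fin n → K}
    (hw : w ∉ LinearMap.range D.mulVecLin) : (skewBorder w D).rank = D.rank + 2 := by
  have injective : Function.Injective
      (LinearMap.vecCons 0 LinearMap.id : (Fin n → K) →ₗ[K] Fin (n + 1) → K) :=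
    fun _ _ h => (vecCons_inj.1 h).2
  have notMem_map (p : Submodule K (Fin n → K)) :
      (vecCons 1 0 : Fin (n + 1) → K) ∉ p.map (LinearMap.vecCons 0 LinearMap.id) := by
    rintro ⟨z, -, hz⟩
    exact zero_ne_one (vecCons_inj.1 hz).1
  rw [rank, hD.range_skewBorder_of_notMem hw, Submodule.finrank_sup_span_singleton (notMem_map _),
    ← (Submodule.equivMapOfInjective _ injective _).finrank_eq,
    Submodule.finrank_sup_span_singleton hw, rank]

lemma rank_skewBorder_le_iff {D : Matrix (Fin n) (Fin n) K} (hD : IsSkewSym D) {w : Fin n → K}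
    {r : ℕ} :
    (skewBorder w D).rank ≤ r ↔
      D.rank + 2 ≤ r ∨ D.rank ≤ r ∧ w ∈ LinearMap.range D.mulVecLin := by
  by_cases hw : w ∈ LinearMap.range D.mulVecLin
  · rw [hD.rank_skewBorder_of_mem hw]
    grind
  · rw [hD.rank_skewBorder_of_notMem hw]
    grind

lemma even_rank {A : Matrix (Fin n) (Fin n) K} (hA : IsSkewSym A) : Even A.rank := by
  induction n with
  | zero => simp [Nat.le_zero.1 A.rank_le_width]
  | succ n ih =>
    obtain ⟨w, D, hD, rfl⟩ := hA.exists_skewBorder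
    by_cases hw : w ∈ LinearMap.range D.mulVecLin
    · exact (hD.rank_skewBorder_of_mem hw).symm ▸ ih hD
    · exact (hD.rank_skewBorder_of_notMem hw).symm ▸ (ih hD).add even_two

/-- Skew-symmetric matrices of size `n + 1`, decomposed into their first row and the block
obtained by deleting the first row and column, so that the former can be counted block by block. -/
def borderEquiv :
    {D : Matrix (Fin n) (Fin n) K // IsSkewSym D} × (Fin n → K) ≃
      {A : Matrix (Fin (n + 1)) (Fin (n + 1)) K // IsSkewSym A} where
  toFun p := ⟨skewBorder p.2 p.1, skewBorder_iff.2 p.1.2⟩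
  invFun A := ⟨⟨A.1.submatrix Fin.succ Fin.succ, skewBorder_iff.1 (A.2.eq_skewBorder ▸ A.2)⟩,
    fun j => A.1 0 j.succ⟩
  left_inv _ := rfl
  right_inv A := Subtype.ext A.2.eq_skewBorder.symm

lemma natCard_succ [Finite K] [Fintype {D : Matrix (Fin n) (Fin n) K // IsSkewSym D}]
    (P : Matrix (Fin (n + 1)) (Fin (n + 1)) K → Prop) :
    Nat.card {A // IsSkewSym A ∧ P A} =
      ∑ D : {D : Matrix (Fin n) (Fin n) K // IsSkewSym D}, Nat.card {w // P (skewBorder w D)} :=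
  calc
    Nat.card {A // IsSkewSym A ∧ P A}
        = Nat.card {p : {D : Matrix (Fin n) (Fin n) K // IsSkewSym D} × (Fin n → K) //
            P (skewBorder p.2 p.1)} :=
          Nat.card_congr ((Equiv.subtypeSubtypeEquivSubtypeInter IsSkewSym P).symm.trans
            (borderEquiv.subtypeEquiv fun _ => Iff.rfl).symm)
    _ = Nat.card (Σ D : {D : Matrix (Fin n) (Fin n) K // IsSkewSym D},
          {w // P (skewBorder w D)}) :=
        Nat.card_congr (Equiv.subtypeProdEquivSigmaSubtype
          fun (D : {D : Matrix (Fin n) (Fin n) K // IsSkewSym D}) w => P (skewBorder w D))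
    _ = _ := Nat.card_sigma

variable {D : Matrix (Fin n) (Fin n) K}

lemma natCard_rank_skewBorder_le_apply_ne_of_row_ne_zero (hD : IsSkewSym D) {i : Fin n}
    (hi : D.row i ≠ 0) (r : ℕ) (a : K) :
    Nat.card {w // (skewBorder w D).rank ≤ r ∧ w i ≠ a} =
      Nat.card {w // (skewBorder w D).rank ≤ r ∧ w i ≠ 0} := by
  obtain ⟨z, hz, rfl⟩ := exists_mem_range_mulVecLin_apply_eq hi a
  exact natCard_apply_ne_of_add_iff
    (fun w => by simp only [hD.rank_skewBorder_le_iff, add_mem_cancel_right hz]) i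

lemma natCard_rank_skewBorder_le_apply_ne_of_rank_ne (hD : IsSkewSym D) {t : ℕ}
    (ht : D.rank ≠ 2 * t) (i : Fin n) (a : K) :
    Nat.card {w // (skewBorder w D).rank ≤ 2 * t ∧ w i ≠ a} =
      Nat.card {w // (skewBorder w D).rank ≤ 2 * t ∧ w i ≠ 0} := by
  have rank_le_iff (w : Fin n → K) : (skewBorder w D).rank ≤ 2 * t ↔ D.rank + 2 ≤ 2 * t := by
    obtain ⟨s, hs⟩ := hD.even_rank
    rw [hD.rank_skewBorder_le_iff]
    lia
  have translate := natCard_apply_ne_of_add_iff (z := Pi.single i a)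
    (P := fun w => (skewBorder w D).rank ≤ 2 * t) (fun w => by rw [rank_le_iff, rank_le_iff]) i
  rwa [Pi.single_eq_same] at translate

lemma natCard_rank_skewBorder_le_apply_ne_of_row_eq_zero (hD : IsSkewSym D) {i : Fin n}
    (hi : D.row i = 0) (a : K) [Decidable (a ≠ 0)] :
    Nat.card {w // (skewBorder w D).rank ≤ D.rank ∧ w i ≠ a} =
      if a ≠ 0 then Nat.card K ^ D.rank else 0 := by
  have rank_le_and_apply_ne_iff (w : Fin n → K) :
      (skewBorder w D).rank ≤ D.rank ∧ w i ≠ a ↔ w ∈ LinearMap.range D.mulVecLin ∧ a ≠ 0 := by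
    rw [hD.rank_skewBorder_le_iff]
    constructor
    · rintro ⟨h | ⟨-, hw⟩, ha⟩
      · lia
      · exact ⟨hw, (apply_eq_zero_of_mem_range_mulVecLin hi hw ▸ ha).symm⟩
    · rintro ⟨hw, ha⟩
      exact ⟨.inr ⟨le_rfl, hw⟩, apply_eq_zero_of_mem_range_mulVecLin hi hw ▸ ha.symm⟩
  rw [Nat.card_congr (Equiv.subtypeEquivRight rank_le_and_apply_ne_iff)]
  split_ifs with ha
  · rw [Nat.card_congr (Equiv.subtypeEquivRight fun w => and_iff_left ha)]
    exact Module.natCard_eq_pow_finrank (K := K) (V := LinearMap.range D.mulVecLin)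
  · simp [ha]

open Classical in
lemma natCard_rank_skewBorder_le_apply_ne (hD : IsSkewSym D) (t : ℕ) (i : Fin n) (a : K) :
    Nat.card {w // (skewBorder w D).rank ≤ 2 * t ∧ w i ≠ a} =
      Nat.card {w // (skewBorder w D).rank ≤ 2 * t ∧ w i ≠ 0} +
        if D.rank = 2 * t ∧ D.row i = 0 ∧ a ≠ 0 then Nat.card K ^ (2 * t) else 0 := by
  by_cases hi : D.row i = 0
  · by_cases ht : D.rank = 2 * t
    · simp [← ht, hi, hD.natCard_rank_skewBorder_le_apply_ne_of_row_eq_zero hi]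
    · simp [ht, hD.natCard_rank_skewBorder_le_apply_ne_of_rank_ne ht i a]
  · simp [hi, hD.natCard_rank_skewBorder_le_apply_ne_of_row_ne_zero hi (2 * t) a]

lemma natCard_trace_skewBorder_ne_zero_eq_sum [Finite K]
    [Fintype {D : Matrix (Fin n) (Fin n) K // IsSkewSym D}] (h2 : (2 : K) ≠ 0) (r : ℕ) (i : Fin n)
    (E : Matrix (Fin n) (Fin n) K) :
    Nat.card {A // IsSkewSym A ∧ A.rank ≤ r ∧ trace (skewBorder (Pi.single i 1) E * A) ≠ 0} =
      ∑ D : {D : Matrix (Fin n) (Fin n) K // IsSkewSym D},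
        Nat.card {w // (skewBorder w D.1).rank ≤ r ∧ w i ≠ trace (E * D.1) / 2} := by
  rw [natCard_succ]
  refine Finset.sum_congr rfl fun D _ => Nat.card_congr (Equiv.subtypeEquivRight fun w => ?_)
  rw [trace_skewBorder_mul_skewBorder, single_one_dotProduct, sub_ne_zero, ne_comm, Ne, Ne,
    eq_div_iff h2, mul_comm]

lemma natCard_trace_skewBorder_ne_zero [Finite K] (h2 : (2 : K) ≠ 0) (t : ℕ) (i : Fin n)
    (E : Matrix (Fin n) (Fin n) K) :
    Nat.card {A : Matrix (Fin (n + 1)) (Fin (n + 1)) K // IsSkewSym A ∧ A.rank ≤ 2 * t ∧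
        trace (skewBorder (Pi.single i 1) E * A) ≠ 0} =
      Nat.card {A : Matrix (Fin (n + 1)) (Fin (n + 1)) K // IsSkewSym A ∧ A.rank ≤ 2 * t ∧
        trace (skewBorder (Pi.single i 1) 0 * A) ≠ 0} +
      Nat.card K ^ (2 * t) *
        Nat.card {D : Matrix (Fin n) (Fin n) K //
          IsSkewSym D ∧ D.rank = 2 * t ∧ D.row i = 0 ∧ trace (E * D) ≠ 0} := by
  classical
  have := Fintype.ofFinite {D : Matrix (Fin n) (Fin n) K // IsSkewSym D}
  rw [natCard_trace_skewBorder_ne_zero_eq_sum h2, natCard_trace_skewBorder_ne_zero_eq_sum h2]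
  simp only [zero_mul, trace_zero, zero_div]
  rw [← sum_subtype_ite_const, ← Finset.sum_add_distrib]
  refine Finset.sum_congr rfl fun D _ =>
    (D.2.natCard_rank_skewBorder_le_apply_ne t i _).trans ?_
  simp [h2]

end IsSkewSym

lemma Estd_zero (m : ℕ) : Estd K 0 m = 0 := by
  ext i j
  simp [Estd]

lemma Estd_succ (k m : ℕ) :
    Estd K (k + 1) (m + 2) = skewBorder (Pi.single 0 1) (skewBorder 0 (Estd K k m)) := by
  ext i j
  refine Fin.cases ?_ (fun i => Fin.cases ?_ (fun i => ?_) i) i <;>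
    refine Fin.cases ?_ (fun j => Fin.cases ?_ (fun j => ?_) j) j <;>
    simp [Estd, skewBorder, Pi.single_apply] <;> lia

lemma natCard_row_zero_eq_zero_trace_ne_zero (E : Matrix (Fin n) (Fin n) K) (r : ℕ) :
    Nat.card {D : Matrix (Fin (n + 1)) (Fin (n + 1)) K // IsSkewSym D ∧ D.rank = r ∧
        D.row 0 = 0 ∧ trace (skewBorder 0 E * D) ≠ 0} =
      Nat.card {C // IsSkewSym C ∧ C.rank = r ∧ trace (E * C) ≠ 0} := by
  have skewBorder_zero_iff {C : Matrix (Fin n) (Fin n) K} :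
      (IsSkewSym C ∧ C.rank = r ∧ trace (E * C) ≠ 0) ↔
        IsSkewSym (skewBorder 0 C) ∧ (skewBorder 0 C).rank = r ∧ (skewBorder 0 C).row 0 = 0 ∧
          trace (skewBorder 0 E * skewBorder 0 C) ≠ 0 := by
    have row_eq_zero : (skewBorder 0 C).row 0 = 0 := cons_zero_zero
    rw [IsSkewSym.skewBorder_iff, trace_skewBorder_mul_skewBorder]
    simp +contextual [IsSkewSym.rank_skewBorder_zero, row_eq_zero]
  refine (Nat.card_congr (Equiv.ofBijective
    (Subtype.map (skewBorder 0) fun _ => skewBorder_zero_iff.1) ⟨?_, ?_⟩)).symm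
  · exact Subtype.map_injective _ fun _ _ h => congrArg (·.submatrix Fin.succ Fin.succ) h
  · rintro ⟨D, hD, h⟩
    obtain ⟨w, C, -, rfl⟩ := hD.exists_skewBorder
    obtain rfl : w = 0 := (cons_eq_zero_iff.1 h.2.1).2
    exact ⟨⟨C, skewBorder_zero_iff.2 ⟨hD, h⟩⟩, rfl⟩

lemma Wcap_succ [Finite K] (h2 : (2 : K) ≠ 0) (k t m : ℕ) :
    Wcap K (k + 1) t (m + 2) =
      Wcap K 1 t (m + 2) + Nat.card K ^ (2 * t) * wSmall K k t m := by
  rw [Wcap, Wcap, Estd_succ, Estd_succ 0, Estd_zero, skewBorder_zero_zero, wSmall,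
    IsSkewSym.natCard_trace_skewBorder_ne_zero h2, natCard_row_zero_eq_zero_trace_ne_zero]

end SkewSym

theorem stmt15 (K : Type) [Field K] [Fintype K] (hchar : ringChar K ≠ 2)
    (m k t : ℕ) (ht : 0 < t) (htm : 2*t ≤ m) (hk : 1 ≤ k) (hkm : 2*k ≤ m) :
    (Wcap K k t m : ℤ) - (Wcap K 1 t m : ℤ)
        = (Fintype.card K : ℤ)^(2*t) * (wSmall K (k-1) t (m-2) : ℤ) ∧
      Wcap K 1 t m ≤ Wcap K k t m := by
  obtain ⟨k, rfl⟩ := Nat.exists_eq_add_of_le' hk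
  obtain ⟨m, rfl⟩ := Nat.exists_eq_add_of_le' (show 2 ≤ m by lia)
  have Wcap_eq := Wcap_succ (Ring.two_ne_zero hchar) k t m
  rw [Nat.card_eq_fintype_card] at Wcap_eq
  rw [Nat.add_sub_cancel, Nat.add_sub_cancel, Wcap_eq]
  exact ⟨by push_cast; ring, Nat.le_add_right _ _⟩
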